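/- arXiv:1304.1576 — 5 statements merged into one kernel-verified Lean document; each statement's English description precedes it below -/
import Mathlib

section
/- Let B be a nontrivial Boolean algebra and X ⊆ B a subset whose only lower bound in B is ⊥ (that is, for every b ∈ B, if b ≤ x for all x ∈ X then b = ⊥). Let S be the set of Boolean algebra homomorphisms from B to Bool (maps preserving ⊤, ⊥, ⊓, ⊔ and complement), topologized as a subspace of the product space B → Bool with Bool discrete. Then the set {f ∈ S : f x = true for all x ∈ X} is closed in S and has empty interior in S. -/
/-- A Boolean algebra homomorphism into `Bool`, as a predicate on functions. -/
def IsBoolHom {B : Type*} [BooleanAlgebra B] (f : B → Bool) : Prop :=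
  f ⊤ = true ∧ f ⊥ = false ∧ (∀ x y, f (x ⊓ y) = (f x && f y)) ∧
    (∀ x y, f (x ⊔ y) = (f x || f y)) ∧ (∀ x, f xᶜ = !f x)

/-!
The sets `basicOpen b = {f | f b = true}` form a basis of clopen sets of the Stone space. By the
prime ideal theorem `b ↦ basicOpen b` reflects the order, so a basic open set is contained in
`⋂ x ∈ X, basicOpen x` exactly when its index is a lower bound of `X`.
-/

open Set TopologicalSpace

section PrimeIdeal

variable {B : Type*} [BooleanAlgebra B]

open scoped Classical in
theorem isBoolHom_decide_notMem {J : Order.Ideal B} (hJ : J.IsPrime) :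
    IsBoolHom fun x ↦ decide (x ∉ J) := by
  have inf_mem_iff (x y : B) : x ⊓ y ∈ J ↔ x ∈ J ∨ y ∈ J :=
    ⟨hJ.mem_or_mem, Or.rec (J.lower inf_le_left) (J.lower inf_le_right)⟩
  have compl_mem_iff (x : B) : xᶜ ∈ J ↔ x ∉ J :=
    ⟨hJ.toIsProper.notMem_of_compl_mem, hJ.compl_mem_of_notMem⟩
  refine ⟨?_, ?_, fun x y ↦ ?_, fun x y ↦ ?_, fun x ↦ ?_⟩
  · simpa using hJ.toIsProper.top_notMem
  · simp
  · simp [inf_mem_iff]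
  · simp [Order.Ideal.sup_mem_iff, imp_iff_not_or]
  · simp [compl_mem_iff]

theorem exists_isBoolHom_of_not_le {b c : B} (hbc : ¬b ≤ c) :
    ∃ f : B → Bool, IsBoolHom f ∧ f b = true ∧ f c = false := by
  classical
  have disjoint_principal :
      Disjoint (Order.PFilter.principal b : Set B) (Order.Ideal.principal c : Set B) :=
    disjoint_left.2 fun x hbx hxc ↦
      hbc ((Order.PFilter.mem_principal.1 hbx).trans (Order.Ideal.mem_principal.1 hxc))
  obtain ⟨J, hJ, hcJ, hbJ⟩ :=
    DistribLattice.prime_ideal_of_disjoint_filter_ideal disjoint_principal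
  have b_notMem : b ∉ J := disjoint_left.1 hbJ (Order.PFilter.mem_principal.2 le_rfl)
  have c_mem : c ∈ J := Order.Ideal.principal_le_iff.1 hcJ
  exact ⟨_, isBoolHom_decide_notMem hJ, by simpa using b_notMem, by simpa using c_mem⟩

end PrimeIdeal

/-- The Stone space of `B`, with its points encoded as homomorphisms `B → Bool` rather than
ultrafilters. It is reducible so that it carries the subspace topology of `B → Bool`. -/
abbrev StoneSpace (B : Type*) [BooleanAlgebra B] : Type _ :=
  {f : B → Bool // IsBoolHom f}

namespace StoneSpace

variable {B : Type*} [BooleanAlgebra B]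

/-- The basic clopen subset of the Stone space attached to `b`, corresponding to the set of
ultrafilters containing `b`. -/
def basicOpen (b : B) : Set (StoneSpace B) :=
  {f | f.1 b = true}

theorem basicOpen_top : basicOpen (⊤ : B) = univ :=
  eq_univ_of_forall fun ⟨_, map_top, _⟩ ↦ map_top

theorem basicOpen_bot : basicOpen (⊥ : B) = ∅ :=
  eq_empty_of_forall_notMem fun ⟨_, _, map_bot, _⟩ ↦ by simp [basicOpen, map_bot]

theorem basicOpen_inf (b c : B) : basicOpen (b ⊓ c) = basicOpen b ∩ basicOpen c := by
  ext ⟨f, _, _, map_inf, _⟩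
  simp [basicOpen, map_inf]

theorem basicOpen_compl (b : B) : basicOpen bᶜ = (basicOpen b)ᶜ := by
  ext ⟨f, _, _, _, _, map_compl⟩
  simp [basicOpen, map_compl]

theorem basicOpen_subset_basicOpen_iff {b c : B} : basicOpen b ⊆ basicOpen c ↔ b ≤ c := by
  refine ⟨fun hsub ↦ ?_, fun hbc ↦ ?_⟩
  · by_contra hbc
    obtain ⟨f, hf, hfb, hfc⟩ := exists_isBoolHom_of_not_le hbc
    have hfc' : f c = true := hsub (show ⟨f, hf⟩ ∈ basicOpen b from hfb)
    exact Bool.false_ne_true (hfc.symm.trans hfc')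
  · rw [← inf_eq_left.2 hbc, basicOpen_inf]
    exact inter_subset_right

theorem isClopen_basicOpen (b : B) : IsClopen (basicOpen b) :=
  (continuous_bool_rng true).1 ((continuous_apply b).comp continuous_subtype_val)

theorem eq_generateFrom_basicOpen :
    (inferInstance : TopologicalSpace (StoneSpace B)) =
      generateFrom (range (basicOpen : B → Set (StoneSpace B))) := by
  refine le_antisymm (le_generateFrom (forall_mem_range.2 fun b ↦ (isClopen_basicOpen b).isOpen)) ?_
  let := generateFrom (range (basicOpen : B → Set (StoneSpace B)))
  have isOpen_basicOpen (b : B) : IsOpen (basicOpen b) := isOpen_generateFrom_of_mem ⟨b, rfl⟩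
  have continuous_val : Continuous (Subtype.val : StoneSpace B → B → Bool) :=
    continuous_pi fun b ↦ (continuous_bool_rng true).2
      ⟨⟨basicOpen_compl b ▸ isOpen_basicOpen bᶜ⟩, isOpen_basicOpen b⟩
  exact continuous_iff_le_induced.1 continuous_val

theorem isTopologicalBasis_basicOpen :
    IsTopologicalBasis (range (basicOpen : B → Set (StoneSpace B))) := by
  rw [← insert_eq_of_mem (mem_range.2 ⟨⊤, basicOpen_top⟩)]
  refine isTopologicalBasis_of_subbasis_of_inter eq_generateFrom_basicOpen ?_
  rintro _ ⟨b, rfl⟩ _ ⟨c, rfl⟩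
  exact ⟨b ⊓ c, basicOpen_inf b c⟩

theorem interior_biInter_basicOpen (X : Set B) :
    interior (⋂ x ∈ X, basicOpen x) = ⋃ b ∈ lowerBounds X, basicOpen b := by
  have subset_iff (b : B) : basicOpen b ⊆ ⋂ x ∈ X, basicOpen x ↔ b ∈ lowerBounds X := by
    simp only [subset_iInter_iff, basicOpen_subset_basicOpen_iff, mem_lowerBounds]
  ext f
  simp only [mem_interior_iff_mem_nhds, isTopologicalBasis_basicOpen.mem_nhds_iff,
    exists_range_iff, subset_iff, mem_iUnion, exists_prop, and_comm]

end StoneSpace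

theorem stone_nowhere_dense {B : Type*} [BooleanAlgebra B] [Nontrivial B]
    (X : Set B) (hX : ∀ b : B, (∀ x ∈ X, b ≤ x) → b = ⊥) :
    IsClosed {f : {g : B → Bool // IsBoolHom g} | ∀ x ∈ X, f.1 x = true} ∧
      interior {f : {g : B → Bool // IsBoolHom g} | ∀ x ∈ X, f.1 x = true} = ∅ := by
  have eq_biInter : {f : StoneSpace B | ∀ x ∈ X, f.1 x = true} =
      ⋂ x ∈ X, StoneSpace.basicOpen x := by
    ext f
    simp only [StoneSpace.basicOpen, mem_iInter, mem_ofPred_eq]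
  rw [eq_biInter, StoneSpace.interior_biInter_basicOpen]
  refine ⟨isClosed_biInter fun x _ ↦ (StoneSpace.isClopen_basicOpen x).isClosed, ?_⟩
  simp only [iUnion_eq_empty]
  intro b hb
  rw [hX b hb, StoneSpace.basicOpen_bot]
end

section
/- Let B be a countable Boolean algebra, let a ∈ B with a ≠ ⊥, and for each n ∈ ℕ let X_n ⊆ B and b_n ∈ B be such that b_n is the least upper bound (supremum) of X_n in B. Then there exists an ultrafilter F of B such that a ∈ F and, for every n, if b_n ∈ F then there exists x ∈ X_n with x ∈ F. -/
/-- An ultrafilter of a Boolean algebra, as a set. -/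
def IsBoolUltrafilter {B : Type*} [BooleanAlgebra B] (F : Set B) : Prop :=
  ⊤ ∈ F ∧ ⊥ ∉ F ∧ (∀ x ∈ F, ∀ y : B, x ≤ y → y ∈ F) ∧
    (∀ x ∈ F, ∀ y ∈ F, x ⊓ y ∈ F) ∧ (∀ x : B, x ∈ F ∨ xᶜ ∈ F)

/-! For each supremum `b = sup X`, the nonzero elements which are either disjoint from `b` or below
some member of `X` are dense, so the Rasiowa–Sikorski lemma yields a proper filter containing `a`
and meeting all of these countably many dense sets. Meeting a set is inherited by larger filters,
so any ultrafilter extending this filter respects every supremum. -/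

open Order

theorem isPFilter_upperClosure_of_directedOn {Q : Type*} [Preorder Q] {s : Set Q}
    (hs : s.Nonempty) (hdir : DirectedOn (· ≥ ·) s) : IsPFilter (upperClosure s : Set Q) := by
  refine .of_def (hs.mono subset_upperClosure) ?_ fun hxy hx => (upperClosure s).upper hxy hx
  rintro x ⟨c, hc, hcx⟩ y ⟨d, hd, hdy⟩
  obtain ⟨e, he, hec, hed⟩ := hdir c hc d hd
  exact ⟨e, subset_upperClosure he, hec.trans hcx, hed.trans hdy⟩

section Dense

variable {P : Type*} [PartialOrder P] [OrderBot P]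

/-- Density in the sense of forcing with the nonzero elements of `P`, ordered so that smaller
elements are stronger conditions. The set `D` itself may contain `⊥`. -/
def IsForcingDense (D : Set P) : Prop :=
  ∀ c : P, c ≠ ⊥ → ∃ d ∈ D, d ≠ ⊥ ∧ d ≤ c

theorem IsForcingDense.isCofinal {D : Set P} (hD : IsForcingDense D) :
    IsCofinal {c : {c : P // c ≠ ⊥}ᵒᵈ | (OrderDual.ofDual c).1 ∈ D} := fun c =>
  let ⟨d, hdD, hd, hdc⟩ := hD (OrderDual.ofDual c).1 (OrderDual.ofDual c).2
  ⟨OrderDual.toDual ⟨d, hd⟩, hdD, hdc⟩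

theorem exists_pfilter_inter_nonempty_of_isForcingDense {ι : Type*} [Countable ι]
    {D : ι → Set P} (hD : ∀ i, IsForcingDense (D i)) {a : P} (ha : a ≠ ⊥) :
    ∃ F : PFilter P, ⊥ ∉ F ∧ a ∈ F ∧ ∀ i, (D i ∩ F).Nonempty := by
  have := Encodable.ofCountable ι
  let p : {c : P // c ≠ ⊥}ᵒᵈ := OrderDual.toDual ⟨a, ha⟩
  let 𝒟 : ι → Cofinal {c : P // c ≠ ⊥}ᵒᵈ := fun i => ⟨_, (hD i).isCofinal⟩
  let G : PFilter {c : P // c ≠ ⊥} := ⟨idealOfCofinals p 𝒟⟩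
  let s : Set P := (↑) '' (G : Set {c : P // c ≠ ⊥})
  have hdir : DirectedOn (· ≥ ·) s := directedOn_image.mpr G.directed
  refine ⟨(isPFilter_upperClosure_of_directedOn (G.nonempty.image _) hdir).toPFilter, ?_, ?_, ?_⟩
  · rintro ⟨_, ⟨c, -, rfl⟩, hc⟩
    exact c.2 (le_bot_iff.mp hc)
  · exact subset_upperClosure ⟨_, mem_idealOfCofinals p 𝒟, rfl⟩
  · intro i
    obtain ⟨d, hdD, hdG⟩ := cofinal_meets_idealOfCofinals p 𝒟 i
    exact ⟨_, hdD, subset_upperClosure ⟨_, hdG, rfl⟩⟩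

end Dense

theorem isForcingDense_disjoint_or_le_of_isLUB {H : Type*} [HeytingAlgebra H] {X : Set H} {b : H}
    (hb : IsLUB X b) : IsForcingDense {d | Disjoint d b ∨ ∃ x ∈ X, d ≤ x} := by
  intro c hc
  by_cases hX : ∀ x ∈ X, Disjoint c x
  · have hbc : b ≤ cᶜ := hb.2 fun x hx => le_compl_iff_disjoint_left.mpr (hX x hx)
    exact ⟨c, .inl (le_compl_iff_disjoint_left.mp hbc), hc, le_rfl⟩
  · push Not at hX
    obtain ⟨x, hx, hcx⟩ := hX
    exact ⟨c ⊓ x, .inr ⟨x, hx, inf_le_right⟩, mt disjoint_iff.mpr hcx, inf_le_left⟩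

section Ultrafilter

variable {B : Type*} [BooleanAlgebra B]

theorem IsBoolUltrafilter.not_disjoint {U : Set B} (hU : IsBoolUltrafilter U) {x y : B}
    (hx : x ∈ U) (hy : y ∈ U) : ¬Disjoint x y := by
  obtain ⟨-, hbot, -, hinf, -⟩ := hU
  exact fun hxy => hbot (hxy.eq_bot ▸ hinf x hx y hy)

theorem isBoolUltrafilter_compl_of_isPrime {J : Ideal B} (hJ : J.IsPrime) :
    IsBoolUltrafilter (J : Set B)ᶜ :=
  ⟨hJ.toIsProper.top_notMem, not_not_intro J.bot_mem, fun _ hx _ hxy hy => hx (J.lower hxy hy),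
    fun _ hx _ hy hxy => (hJ.mem_or_mem hxy).elim hx hy,
    fun _ => hJ.toIsProper.notMem_or_compl_notMem⟩

theorem exists_isBoolUltrafilter_superset {F : PFilter B} (hF : ⊥ ∉ F) :
    ∃ U : Set B, IsBoolUltrafilter U ∧ (F : Set B) ⊆ U := by
  have hdisj : Disjoint (F : Set B) (⊥ : Ideal B) :=
    Set.disjoint_left.mpr fun x hxF hx => hF (le_bot_iff.mp hx ▸ hxF)
  obtain ⟨J, hJ, -, hFJ⟩ := DistribLattice.prime_ideal_of_disjoint_filter_ideal hdisj
  exact ⟨_, isBoolUltrafilter_compl_of_isPrime hJ, hFJ.subset_compl_right⟩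

end Ultrafilter

theorem countable_sup_preserving_ultrafilter_general {B ι : Type*} [BooleanAlgebra B] [Countable ι]
    (a : B) (ha : a ≠ ⊥) (X : ι → Set B) (b : ι → B) (hlub : ∀ i, IsLUB (X i) (b i)) :
    ∃ F : Set B, IsBoolUltrafilter F ∧ a ∈ F ∧ ∀ i, b i ∈ F → ∃ x ∈ X i, x ∈ F := by
  obtain ⟨F, hF, haF, hdense⟩ := exists_pfilter_inter_nonempty_of_isForcingDense
    (fun i => isForcingDense_disjoint_or_le_of_isLUB (hlub i)) ha
  obtain ⟨U, hU, hFU⟩ := exists_isBoolUltrafilter_superset hF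
  refine ⟨U, hU, hFU haF, fun i hbU => ?_⟩
  obtain ⟨d, hdb | ⟨x, hx, hdx⟩, hdF⟩ := hdense i
  · exact absurd hdb (hU.not_disjoint (hFU hdF) hbU)
  · exact ⟨x, hx, hFU (PFilter.mem_of_le hdx hdF)⟩

theorem countable_sup_preserving_ultrafilter {B : Type*} [BooleanAlgebra B] [Countable B]
    (a : B) (ha : a ≠ ⊥) (X : ℕ → Set B) (b : ℕ → B)
    (hlub : ∀ n, IsLUB (X n) (b n)) :
    ∃ F : Set B, IsBoolUltrafilter F ∧ a ∈ F ∧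
      ∀ n, b n ∈ F → ∃ x ∈ X n, x ∈ F :=
  countable_sup_preserving_ultrafilter_general a ha X b hlub
end

section
/- Let B be a countable Boolean algebra that is hereditary atomic, i.e., every Boolean subalgebra of B is an atomic Boolean algebra. Then the set of ultrafilters of B is at most countable. -/
/-- A Boolean subalgebra of `B`, as a subset. -/
def IsBoolSubalgebra {B : Type*} [BooleanAlgebra B] (C : Set B) : Prop :=
  ⊤ ∈ C ∧ ⊥ ∈ C ∧ (∀ x ∈ C, ∀ y ∈ C, x ⊓ y ∈ C) ∧
    (∀ x ∈ C, ∀ y ∈ C, x ⊔ y ∈ C) ∧ (∀ x ∈ C, xᶜ ∈ C)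

/-- The subalgebra carried by the subset `C` is atomic: below every nonzero element of `C`
there is a minimal nonzero element of `C`. -/
def SubalgAtomic {B : Type*} [BooleanAlgebra B] (C : Set B) : Prop :=
  ∀ x ∈ C, x ≠ ⊥ → ∃ a ∈ C, a ≠ ⊥ ∧ (∀ y ∈ C, y ≤ a → y = ⊥ ∨ y = a) ∧ a ≤ x

/-!
Let `κ = max ℵ₀ #B` and suppose there are more than `κ` ultrafilters. Since `B` has at most `κ`
elements, all but `κ` ultrafilters are condensation points of the Stone space: each of their
members lies in more than `κ` ultrafilters. An element `b` lying in more than `κ` ultrafilters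
therefore belongs to two distinct condensation points, and an element `c` separating them splits
`b` into `b ⊓ c` and `b \ c`, both again in more than `κ` ultrafilters. Iterating from `⊤` gives a
full binary tree of nonzero elements; the elements decided by every node of large enough depth form
a subalgebra without atoms.
-/

open Cardinal Filter

section DyadicScheme

variable {B : Type*} [BooleanAlgebra B]

/-- The elements `x` such that, eventually along `L`, the member `A i` of the family lies below `x`
or below its complement. For a binary tree `A` and `L` the filter of depth tending to infinity, this
is the subalgebra generated by the nodes of `A`. -/
def eventuallyDecided {ι : Type*} (L : Filter ι) (A : ι → B) : Set B :=
  {x | ∀ᶠ i in L, A i ≤ x ∨ Disjoint (A i) x}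

theorem isBoolSubalgebra_eventuallyDecided {ι : Type*} (L : Filter ι) (A : ι → B) :
    IsBoolSubalgebra (eventuallyDecided L A) := by
  have compl_mem : ∀ x ∈ eventuallyDecided L A, xᶜ ∈ eventuallyDecided L A := fun x hx ↦
    hx.mono fun i hi ↦ by
      rwa [le_compl_iff_disjoint_right, disjoint_compl_right_iff, or_comm]
  have inf_mem : ∀ x ∈ eventuallyDecided L A, ∀ y ∈ eventuallyDecided L A,
      x ⊓ y ∈ eventuallyDecided L A := fun x hx y hy ↦ by
    filter_upwards [hx, hy] with i hix hiy
    rcases hix with hle | hdisj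
    · exact hiy.imp (le_inf hle) fun h ↦ h.mono_right inf_le_right
    · exact Or.inr (hdisj.mono_right inf_le_left)
  refine ⟨.of_forall fun _ ↦ .inl le_top, .of_forall fun _ ↦ .inr disjoint_bot_right,
    inf_mem, fun x hx y hy ↦ ?_, compl_mem⟩
  simpa only [compl_inf, compl_compl] using
    compl_mem _ (inf_mem _ (compl_mem x hx) _ (compl_mem y hy))

/-- A complete binary tree of elements of `B` with root `⊤`, in which every node is the disjoint
union of its two children. Nodes are indexed by their addresses, read from the node up to the root:
the children of the node at `l` are those at `true :: l` and `false :: l`. -/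
structure IsDyadicScheme (A : List Bool → B) : Prop where
  root : A [] = ⊤
  sup_children (l : List Bool) : A (true :: l) ⊔ A (false :: l) = A l
  disjoint_children (l : List Bool) : Disjoint (A (true :: l)) (A (false :: l))

namespace IsDyadicScheme

variable {A : List Bool → B}

theorem cons_le (hA : IsDyadicScheme A) (t : Bool) (l : List Bool) : A (t :: l) ≤ A l := by
  rw [← hA.sup_children l]
  cases t
  exacts [le_sup_right, le_sup_left]

theorem le_of_suffix (hA : IsDyadicScheme A) {l m : List Bool} (h : l <:+ m) : A m ≤ A l := by
  obtain ⟨p, rfl⟩ := h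
  induction p with
  | nil => exact le_rfl
  | cons t p ih => exact (hA.cons_le t _).trans ih

theorem disjoint_of_length_eq (hA : IsDyadicScheme A) {l m : List Bool}
    (hlen : l.length = m.length) (hne : l ≠ m) : Disjoint (A l) (A m) := by
  induction l generalizing m with
  | nil => exact absurd (List.eq_nil_of_length_eq_zero hlen.symm).symm hne
  | cons s l ih =>
    obtain _ | ⟨t, m⟩ := m
    · simp at hlen
    obtain rfl | hlm := eq_or_ne l m
    · cases s <;> cases t
      exacts [absurd rfl hne, (hA.disjoint_children l).symm, hA.disjoint_children l,
        absurd rfl hne]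
    · exact (ih (Nat.succ.inj hlen) hlm).mono (hA.cons_le s l) (hA.cons_le t m)

theorem eq_bot_of_disjoint_level (hA : IsDyadicScheme A) {x : B} (n : ℕ)
    (h : ∀ l : List Bool, l.length = n → Disjoint (A l) x) : x = ⊥ := by
  induction n with
  | zero => simpa only [hA.root, top_disjoint] using h [] rfl
  | succ n ih =>
    refine ih fun l hl ↦ ?_
    rw [← hA.sup_children l, disjoint_sup_left]
    exact ⟨h _ (congrArg (· + 1) hl), h _ (congrArg (· + 1) hl)⟩

theorem mem_eventuallyDecided (hA : IsDyadicScheme A) (m : List Bool) :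
    A m ∈ eventuallyDecided (comap List.length atTop) A := by
  filter_upwards [(eventually_ge_atTop m.length).comap List.length] with l hml
  have hsuffix : l.drop (l.length - m.length) <:+ l := List.drop_suffix _ l
  have hlen : (l.drop (l.length - m.length)).length = m.length := by
    rw [List.length_drop, Nat.sub_sub_self hml]
  obtain heq | hne := eq_or_ne (l.drop (l.length - m.length)) m
  · exact Or.inl (hA.le_of_suffix (heq ▸ hsuffix))
  · exact Or.inr ((hA.disjoint_of_length_eq hlen hne).mono_left (hA.le_of_suffix hsuffix))

theorem exists_le_of_mem_eventuallyDecided (hA : IsDyadicScheme A) {x : B}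
    (hx : x ∈ eventuallyDecided (comap List.length atTop) A) (hne : x ≠ ⊥) : ∃ l, A l ≤ x := by
  obtain ⟨n, hn⟩ := (eventually_comap.1 hx).exists
  by_contra! hnot_le
  exact hne (hA.eq_bot_of_disjoint_level n fun l hl ↦ (hn l hl).resolve_left (hnot_le l))

theorem not_subalgAtomic_eventuallyDecided (hA : IsDyadicScheme A) (hne : ∀ l, A l ≠ ⊥) :
    ¬ SubalgAtomic (eventuallyDecided (comap List.length atTop) A) := by
  intro hatomic
  obtain ⟨a, ha, ha_ne, ha_min, -⟩ := hatomic (A []) (hA.mem_eventuallyDecided []) (hne [])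
  obtain ⟨l, hl⟩ := hA.exists_le_of_mem_eventuallyDecided ha ha_ne
  have child_eq (t : Bool) : A (t :: l) = a :=
    (ha_min _ (hA.mem_eventuallyDecided _) ((hA.cons_le t l).trans hl)).resolve_left (hne _)
  have hdisj := hA.disjoint_children l
  rw [child_eq, child_eq, disjoint_self] at hdisj
  exact ha_ne hdisj

end IsDyadicScheme

theorem exists_isDyadicScheme_of_splitting {P : B → Prop} (top : P ⊤)
    (split : ∀ b, P b → ∃ c, P (b ⊓ c) ∧ P (b \ c)) :
    ∃ A : List Bool → B, IsDyadicScheme A ∧ ∀ l, P (A l) := by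
  choose! f hinf hsdiff using split
  refine ⟨List.foldr (fun t b ↦ if t then b ⊓ f b else b \ f b) ⊤,
    ⟨rfl, fun _ ↦ sup_inf_sdiff _ _, fun _ ↦ disjoint_inf_sdiff⟩, fun l ↦ ?_⟩
  induction l with
  | nil => exact top
  | cons t l ih =>
    cases t
    exacts [hsdiff _ ih, hinf _ ih]

theorem exists_not_subalgAtomic_of_splitting {P : B → Prop} (top : P ⊤) (bot : ¬ P ⊥)
    (split : ∀ b, P b → ∃ c, P (b ⊓ c) ∧ P (b \ c)) :
    ∃ C : Set B, IsBoolSubalgebra C ∧ ¬ SubalgAtomic C := by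
  obtain ⟨A, hA, hP⟩ := exists_isDyadicScheme_of_splitting top split
  exact ⟨_, isBoolSubalgebra_eventuallyDecided _ A,
    hA.not_subalgAtomic_eventuallyDecided fun l hl ↦ bot (hl ▸ hP l)⟩

end DyadicScheme

section StoneSpace

variable {B : Type*} [BooleanAlgebra B]

theorem IsBoolUltrafilter.eq_of_subset {F G : Set B} (hF : IsBoolUltrafilter F)
    (hG : IsBoolUltrafilter G) (hFG : F ⊆ G) : F = G := by
  obtain ⟨-, -, -, -, hF_or⟩ := hF
  obtain ⟨-, hG_bot, -, hG_inf, -⟩ := hG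
  refine hFG.antisymm fun x hx ↦ (hF_or x).resolve_right fun hxc ↦ hG_bot ?_
  simpa only [inf_compl_self] using hG_inf x hx xᶜ (hFG hxc)

theorem IsBoolUltrafilter.exists_mem_compl_mem_of_ne {F G : Set B} (hF : IsBoolUltrafilter F)
    (hG : IsBoolUltrafilter G) (hne : F ≠ G) : ∃ c ∈ F, cᶜ ∈ G := by
  obtain ⟨c, hcF, hcG⟩ := Set.not_subset.1 (mt (hF.eq_of_subset hG) hne)
  obtain ⟨-, -, -, -, hG_or⟩ := hG
  exact ⟨c, hcF, (hG_or c).resolve_left hcG⟩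

/-- The basic clopen subset of the Stone space of `B` determined by `b`: the ultrafilters that
contain `b`. -/
def stoneClopen (b : B) : Set (Set B) :=
  {F | IsBoolUltrafilter F ∧ b ∈ F}

theorem stoneClopen_top : stoneClopen (⊤ : B) = {F | IsBoolUltrafilter F} :=
  Set.ext fun _ ↦ ⟨And.left, fun hF ↦ ⟨hF, hF.1⟩⟩

theorem stoneClopen_bot : stoneClopen (⊥ : B) = ∅ :=
  Set.eq_empty_of_forall_notMem fun _ hF ↦ hF.1.2.1 hF.2

variable {κ : Cardinal}

theorem mk_iUnion_stoneClopen_le (hκ : ℵ₀ ≤ κ) (hB : #B ≤ κ) :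
    #(⋃ b : {b : B // #(stoneClopen b) ≤ κ}, stoneClopen b.1) ≤ κ :=
  calc
    _ ≤ #{b : B // #(stoneClopen b) ≤ κ} * ⨆ b : {b : B // #(stoneClopen b) ≤ κ},
          #(stoneClopen b.1) := mk_iUnion_le _
    _ ≤ κ * κ := mul_le_mul' ((mk_subtype_le _).trans hB) (ciSup_le' Subtype.property)
    _ = κ := mul_eq_self hκ

theorem nontrivial_condensation_of_lt_mk_stoneClopen (hκ : ℵ₀ ≤ κ) (hB : #B ≤ κ) {b : B}
    (hb : κ < #(stoneClopen b)) :
    {F ∈ stoneClopen b | ∀ c ∈ F, κ < #(stoneClopen c)}.Nontrivial := by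
  set T := {F ∈ stoneClopen b | ∀ c ∈ F, κ < #(stoneClopen c)}
  set U := ⋃ c : {c : B // #(stoneClopen c) ≤ κ}, stoneClopen c.1
  by_contra hT
  have hT_le : #T ≤ 1 := mk_le_one_iff_set_subsingleton.2 (Set.not_nontrivial_iff.1 hT)
  have hcover : stoneClopen b ⊆ T ∪ U := fun F hF ↦ by
    by_cases hbig : ∀ c ∈ F, κ < #(stoneClopen c)
    · exact Or.inl ⟨hF, hbig⟩
    · push Not at hbig
      obtain ⟨c, hcF, hc⟩ := hbig
      exact Or.inr (Set.mem_iUnion.2 ⟨⟨c, hc⟩, hF.1, hcF⟩)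
  refine hb.not_ge ?_
  calc
    #(stoneClopen b) ≤ #T + #U := (mk_le_mk_of_subset hcover).trans (mk_union_le T U)
    _ ≤ κ + κ := add_le_add (hT_le.trans (one_le_aleph0.trans hκ))
      (mk_iUnion_stoneClopen_le hκ hB)
    _ = κ := add_eq_self hκ

theorem exists_split_of_lt_mk_stoneClopen (hκ : ℵ₀ ≤ κ) (hB : #B ≤ κ) {b : B}
    (hb : κ < #(stoneClopen b)) :
    ∃ c, κ < #(stoneClopen (b ⊓ c)) ∧ κ < #(stoneClopen (b \ c)) := by
  obtain ⟨F, ⟨⟨hF, hbF⟩, hF_big⟩, G, ⟨⟨hG, hbG⟩, hG_big⟩, hne⟩ :=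
    nontrivial_condensation_of_lt_mk_stoneClopen hκ hB hb
  obtain ⟨c, hcF, hcG⟩ := hF.exists_mem_compl_mem_of_ne hG hne
  obtain ⟨-, -, -, hF_inf, -⟩ := hF
  obtain ⟨-, -, -, hG_inf, -⟩ := hG
  exact ⟨c, hF_big _ (hF_inf b hbF c hcF), sdiff_eq (x := b) ▸ hG_big _ (hG_inf b hbG cᶜ hcG)⟩

end StoneSpace

theorem hereditary_atomic_countably_many_ultrafilters_general {B : Type*} [BooleanAlgebra B]
    (hha : ∀ C : Set B, IsBoolSubalgebra C → SubalgAtomic C) :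
    #{F : Set B | IsBoolUltrafilter F} ≤ max ℵ₀ #B := by
  by_contra! hlt
  obtain ⟨C, hC, hC_not⟩ :=
    exists_not_subalgAtomic_of_splitting (P := fun b : B ↦ max ℵ₀ #B < #(stoneClopen b))
      (by rwa [stoneClopen_top])
      (by simp only [stoneClopen_bot, mk_eq_zero, not_lt_zero, not_false_eq_true])
      fun _ ↦ exists_split_of_lt_mk_stoneClopen (le_max_left _ _) (le_max_right _ _)
  exact hC_not (hha C hC)

theorem hereditary_atomic_countably_many_ultrafilters {B : Type*} [BooleanAlgebra B]
    [Countable B] (hha : ∀ C : Set B, IsBoolSubalgebra C → SubalgAtomic C) :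
    {F : Set B | IsBoolUltrafilter F}.Countable :=
  le_aleph0_iff_set_countable.1 <|
    (hereditary_atomic_countably_many_ultrafilters_general hha).trans_eq (max_eq_left mk_le_aleph0)
end

section
/- Let B be a Boolean algebra that is generated by its atoms, i.e., the smallest Boolean subalgebra of B containing all atoms of B is B itself. Then B is hereditary atomic: every Boolean subalgebra of B is atomic. -/
/-!
The elements with finitely many elements below them form an ideal `I`. The elements lying in `I` or
having their complement in `I` form a subalgebra, and it contains all atoms; so if the atoms
generate `B`, every element of `B` is of this kind. Now let `x` be a nonzero element of a subalgebra
`C`. If `C` has a nonzero element of `I` below `x`, finitely many elements lie below it, and a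
minimal nonzero element of `C` is found among them. Otherwise `x` itself is minimal: for nonzero
`y ≤ x` in `C` we have `yᶜ ∈ I`, hence `x \ y` is an element of `C ∩ I` below `x`, so it vanishes.
-/

section FiniteIdeal

variable {α : Type*} [DistribLattice α]

theorem finite_Iic_sup {x y : α} (hx : (Set.Iic x).Finite) (hy : (Set.Iic y).Finite) :
    (Set.Iic (x ⊔ y)).Finite := by
  refine (hx.image2 (· ⊔ ·) hy).subset fun z (hz : z ≤ x ⊔ y) ↦ ?_
  have decomposition : z ⊓ x ⊔ z ⊓ y = z := by rw [← inf_sup_left, inf_eq_left.2 hz]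
  exact ⟨z ⊓ x, inf_le_right, z ⊓ y, inf_le_right, decomposition⟩

variable [OrderBot α]

variable (α) in
/-- The ideal of elements with only finitely many elements below them. In a Boolean algebra
these are the finite joins of atoms. -/
def finiteIdeal : Order.Ideal α where
  carrier := {x | (Set.Iic x).Finite}
  lower' _ _ hyx hx := hx.subset (Set.Iic_subset_Iic.2 hyx)
  nonempty' := ⟨⊥, by simp⟩
  directed' x hx y hy := ⟨x ⊔ y, finite_Iic_sup hx hy, le_sup_left, le_sup_right⟩

theorem mem_finiteIdeal {x : α} : x ∈ finiteIdeal α ↔ (Set.Iic x).Finite :=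
  Iff.rfl

theorem mem_finiteIdeal_of_isAtom {a : α} (ha : IsAtom a) : a ∈ finiteIdeal α := by
  rw [mem_finiteIdeal, ha.Iic_eq]
  exact Set.toFinite _

end FiniteIdeal

theorem exists_le_minimal_of_finite_Iic {α : Type*} [Preorder α] {p : α → Prop} {x : α}
    (hfin : (Set.Iic x).Finite) (hx : p x) : ∃ a ≤ x, Minimal p a := by
  obtain ⟨a, hax, ha⟩ :=
    (hfin.inter_of_left {y | p y}).exists_le_minimal ⟨Set.self_mem_Iic, hx⟩
  exact ⟨a, hax, ha.prop.2, fun y hy hya ↦ ha.le_of_le ⟨hya.trans hax, hy⟩ hya⟩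

section BooleanAlgebra

variable {B : Type*} [BooleanAlgebra B] {C : Set B} {x y : B}

theorem isBoolSubalgebra_mem_or_compl_mem (I : Order.Ideal B) :
    IsBoolSubalgebra {x | x ∈ I ∨ xᶜ ∈ I} := by
  have compl_closed : ∀ x, x ∈ I ∨ xᶜ ∈ I → xᶜ ∈ I ∨ xᶜᶜ ∈ I := fun x hx ↦ by
    rwa [compl_compl, or_comm]
  have sup_closed : ∀ x, x ∈ I ∨ xᶜ ∈ I → ∀ y, y ∈ I ∨ yᶜ ∈ I →
      x ⊔ y ∈ I ∨ (x ⊔ y)ᶜ ∈ I := by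
    rintro x (hx | hx) y (hy | hy)
    · exact .inl (I.sup_mem hx hy)
    · exact .inr (I.lower (compl_le_compl le_sup_right) hy)
    all_goals exact .inr (I.lower (compl_le_compl le_sup_left) hx)
  have inf_closed : ∀ x, x ∈ I ∨ xᶜ ∈ I → ∀ y, y ∈ I ∨ yᶜ ∈ I →
      x ⊓ y ∈ I ∨ (x ⊓ y)ᶜ ∈ I := fun x hx y hy ↦ by
    simpa only [compl_sup, compl_compl] using
      compl_closed _ (sup_closed _ (compl_closed x hx) _ (compl_closed y hy))
  exact ⟨.inr (by simp), .inl I.bot_mem, inf_closed, sup_closed, compl_closed⟩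

theorem IsBoolSubalgebra.sdiff_mem (hC : IsBoolSubalgebra C) (hx : x ∈ C) (hy : y ∈ C) :
    x \ y ∈ C := by
  obtain ⟨-, -, inf_mem, -, compl_mem⟩ := hC
  rw [sdiff_eq]
  exact inf_mem x hx _ (compl_mem y hy)

theorem subalgAtomic_iff_exists_minimal :
    SubalgAtomic C ↔ ∀ x ∈ C, x ≠ ⊥ → ∃ a ≤ x, Minimal (fun y ↦ y ∈ C ∧ y ≠ ⊥) a := by
  refine forall₃_congr fun x _ _ ↦ ⟨?_, ?_⟩
  · rintro ⟨a, haC, ha₀, ha, hax⟩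
    exact ⟨a, hax, ⟨haC, ha₀⟩, fun y ⟨hy, hy₀⟩ hya ↦ ((ha y hy hya).resolve_left hy₀).ge⟩
  · rintro ⟨a, hax, ⟨haC, ha₀⟩, ha⟩
    exact ⟨a, haC, ha₀, fun y hy hya ↦
      or_iff_not_imp_left.2 fun hy₀ ↦ hya.antisymm (ha ⟨hy, hy₀⟩ hya), hax⟩

theorem IsBoolSubalgebra.minimal_of_forall_mem_ideal_eq_bot (hC : IsBoolSubalgebra C)
    {I : Order.Ideal B} (hI : ∀ y ∈ C, y ∈ I ∨ yᶜ ∈ I) (hx : x ∈ C) (hx₀ : x ≠ ⊥)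
    (hxI : ∀ y ∈ C, y ∈ I → y ≤ x → y = ⊥) : Minimal (fun y ↦ y ∈ C ∧ y ≠ ⊥) x := by
  refine ⟨⟨hx, hx₀⟩, fun y ⟨hy, hy₀⟩ hyx ↦ ?_⟩
  have hyI : yᶜ ∈ I := (hI y hy).resolve_left fun h ↦ hy₀ (hxI y hy h hyx)
  have hdiff : x \ y ∈ I := I.lower (sdiff_eq.trans_le inf_le_right) hyI
  exact sdiff_eq_bot_iff.1 (hxI _ (hC.sdiff_mem hx hy) hdiff sdiff_le)

theorem IsBoolSubalgebra.subalgAtomic_of_mem_or_compl_mem_finiteIdeal (hC : IsBoolSubalgebra C)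
    (hfin : ∀ x ∈ C, x ∈ finiteIdeal B ∨ xᶜ ∈ finiteIdeal B) : SubalgAtomic C := by
  refine subalgAtomic_iff_exists_minimal.2 fun x hx hx₀ ↦ ?_
  by_cases hxI : ∀ y ∈ C, y ∈ finiteIdeal B → y ≤ x → y = ⊥
  · exact ⟨x, le_rfl, hC.minimal_of_forall_mem_ideal_eq_bot hfin hx hx₀ hxI⟩
  · push Not at hxI
    obtain ⟨y, hy, hyI, hyx, hy₀⟩ := hxI
    obtain ⟨a, hay, ha⟩ :=
      exists_le_minimal_of_finite_Iic (p := fun z ↦ z ∈ C ∧ z ≠ ⊥) hyI ⟨hy, hy₀⟩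
    exact ⟨a, hay.trans hyx, ha⟩

end BooleanAlgebra

theorem generated_by_atoms_hereditary_atomic {B : Type*} [BooleanAlgebra B]
    (hgen : ∀ C : Set B, IsBoolSubalgebra C → (∀ a : B, IsAtom a → a ∈ C) → C = Set.univ) :
    ∀ C : Set B, IsBoolSubalgebra C → SubalgAtomic C := by
  intro C hC
  have huniv : {x : B | x ∈ finiteIdeal B ∨ xᶜ ∈ finiteIdeal B} = Set.univ :=
    hgen _ (isBoolSubalgebra_mem_or_compl_mem _) fun _ ha ↦ .inl (mem_finiteIdeal_of_isAtom ha)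
  exact hC.subalgAtomic_of_mem_or_compl_mem_finiteIdeal fun x _ ↦ Set.eq_univ_iff_forall.1 huniv x
end

section
/- Let B be an infinite complete Boolean algebra. Then B is not hereditary atomic; that is, B has a Boolean subalgebra that is not atomic. -/
/-!
An infinite Boolean algebra contains a sequence of nonzero pairwise disjoint elements. When
countable joins exist, enlarging one term of the sequence turns it into a partition of unity
`(dₙ)`, and `S ↦ ⨆ n ∈ S, dₙ` embeds the power set of `ℕ` as a Boolean subalgebra. The periodic
sets form an atomless subalgebra of that power set, because a residue class modulo `p` properly
contains one modulo `2 * p`, and the image of this subalgebra is not atomic.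
-/

open Set Function

section Subalgebra

variable {A B : Type*} [BooleanAlgebra A] [BooleanAlgebra B]

lemma isBoolSubalgebra_coe (L : BooleanSubalgebra B) : IsBoolSubalgebra (L : Set B) :=
  ⟨L.top_mem, L.bot_mem, fun _ hx _ hy ↦ L.inf_mem hx hy, fun _ hx _ hy ↦ L.sup_mem hx hy,
    fun _ hx ↦ L.compl_mem hx⟩

lemma SubalgAtomic.isAtomic {L : BooleanSubalgebra B} (h : SubalgAtomic (L : Set B)) :
    IsAtomic L := by
  refine ⟨fun x ↦ or_iff_not_imp_left.2 fun hx ↦ ?_⟩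
  obtain ⟨a, haL, ha, hmin, hax⟩ := h x x.2 fun h ↦ hx (Subtype.ext h)
  refine ⟨⟨a, haL⟩, ⟨fun h ↦ ha (congrArg Subtype.val h), fun y hy ↦ ?_⟩, hax⟩
  exact Subtype.ext ((hmin y y.2 hy.le).resolve_right fun h ↦ hy.ne (Subtype.ext h))

lemma isAtomic_map_iff {f : BoundedLatticeHom A B} (hf : Injective f) (L : BooleanSubalgebra A) :
    IsAtomic (L.map f) ↔ IsAtomic L :=
  let e : L ≃o L.map f :=
    { Equiv.Set.image f L hf with
      map_rel_iff' := (orderEmbeddingOfInjective f hf).le_iff_le }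
  e.isAtomic_iff.symm

end Subalgebra

section PeriodicSets

/-- The Boolean algebra of sets of natural numbers that are periodic with some nonzero period,
which serves as the model of an atomless subalgebra of a power set. -/
def periodicSets : BooleanSubalgebra (Set ℕ) where
  carrier := {S | ∃ p ≠ 0, Periodic (· ∈ S) p}
  supClosed' := by
    rintro S ⟨p, hp, hS⟩ T ⟨q, hq, hT⟩
    exact ⟨p * q, mul_ne_zero hp hq, fun n ↦
      congrArg₂ Or (mul_comm p q ▸ hS.nat_mul q n) (hT.nat_mul p n)⟩
  infClosed' := by
    rintro S ⟨p, hp, hS⟩ T ⟨q, hq, hT⟩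
    exact ⟨p * q, mul_ne_zero hp hq, fun n ↦
      congrArg₂ And (mul_comm p q ▸ hS.nat_mul q n) (hT.nat_mul p n)⟩
  compl_mem' := fun ⟨p, hp, hS⟩ ↦ ⟨p, hp, hS.comp Not⟩
  bot_mem' := ⟨1, one_ne_zero, fun _ ↦ rfl⟩

lemma setOf_modEq_mem_periodicSets (n : ℕ) {p : ℕ} (hp : p ≠ 0) :
    {m | m ≡ n [MOD p]} ∈ periodicSets :=
  ⟨p, hp, fun m ↦ by simp [Nat.ModEq]⟩

lemma apply_eq_of_periodic_of_modEq {α : Type*} {f : ℕ → α} {p m n : ℕ} (hf : Periodic f p)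
    (hmn : m ≡ n [MOD p]) : f m = f n := by
  rw [← hf.map_mod_nat m, ← hf.map_mod_nat n, hmn]

lemma setOf_modEq_two_mul_ssubset {S : Set ℕ} {p n : ℕ} (hp : p ≠ 0)
    (hS : Periodic (· ∈ S) p) (hn : n ∈ S) : {m | m ≡ n [MOD 2 * p]} ⊂ S := by
  refine ssubset_iff_exists.2 ⟨fun m hm ↦ ?_, n + p, (hS n).mpr hn, fun h ↦ ?_⟩
  · exact (apply_eq_of_periodic_of_modEq hS (hm.of_dvd (dvd_mul_left p 2))).mpr hn
  · have hdvd : 2 * p ∣ p := Nat.modEq_zero_iff_dvd.1 (Nat.ModEq.add_left_cancel' n h)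
    have hle : 2 * p ≤ p := Nat.le_of_dvd (Nat.pos_of_ne_zero hp) hdvd
    omega

lemma not_isAtom_periodicSets (S : periodicSets) : ¬ IsAtom S := by
  obtain ⟨S, p, hp, hS⟩ := S
  intro hatom
  obtain ⟨n, hn⟩ : S.Nonempty := nonempty_iff_ne_empty.2 fun h ↦ hatom.1 (Subtype.ext h)
  let T : periodicSets :=
    ⟨{m | m ≡ n [MOD 2 * p]}, setOf_modEq_mem_periodicSets n (mul_ne_zero two_ne_zero hp)⟩
  have hT : T = ⊥ := hatom.2 T (setOf_modEq_two_mul_ssubset hp hS hn)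
  exact (congrArg (n ∈ ·.1) hT).mp (Nat.ModEq.refl n)

lemma not_isAtomic_periodicSets : ¬ IsAtomic periodicSets := fun _ ↦
  have : Nontrivial periodicSets := ⟨⊥, ⊤, fun h ↦ empty_ne_univ (congrArg Subtype.val h)⟩
  let ⟨S, hS⟩ := IsAtomic.exists_atom periodicSets
  not_isAtom_periodicSets S hS

end PeriodicSets

section LUB

variable {H : Type*} [HeytingAlgebra H] {s t : Set H} {a b : H}

lemma disjoint_right_of_isLUB (ht : IsLUB t b) (h : ∀ y ∈ t, Disjoint a y) : Disjoint a b :=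
  le_compl_iff_disjoint_left.1 <| ht.2 fun y hy ↦ le_compl_iff_disjoint_left.2 (h y hy)

lemma disjoint_of_isLUB_of_isLUB (hs : IsLUB s a) (ht : IsLUB t b)
    (h : ∀ x ∈ s, ∀ y ∈ t, Disjoint x y) : Disjoint a b :=
  disjoint_right_of_isLUB ht fun y hy ↦
    (disjoint_right_of_isLUB hs fun x hx ↦ (h x hx y hy).symm).symm

end LUB

/-- A partition of unity in a Boolean algebra: an indexed family of nonzero, pairwise disjoint
elements with join `⊤`. The join is expressed by `IsLUB` so that no completeness is assumed. -/
structure IsPartitionOfUnity {ι B : Type*} [BooleanAlgebra B] (d : ι → B) : Prop where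
  ne_bot : ∀ i, d i ≠ ⊥
  pairwise_disjoint : Pairwise (Disjoint on d)
  isLUB_range : IsLUB (range d) ⊤

namespace IsPartitionOfUnity

variable {ι B : Type*} [BooleanAlgebra B] {d : ι → B} {S : Set ι} {a b : B}

lemma isCompl_of_isLUB (hd : IsPartitionOfUnity d) (ha : IsLUB (d '' S) a)
    (hb : IsLUB (d '' Sᶜ) b) : IsCompl a b where
  disjoint := disjoint_of_isLUB_of_isLUB ha hb <| by
    rintro _ ⟨i, hi, rfl⟩ _ ⟨j, hj, rfl⟩
    exact hd.pairwise_disjoint fun h ↦ hj (h ▸ hi)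
  codisjoint := codisjoint_iff.2 <| (ha.union hb).unique <| by
    rw [← image_union, union_compl_self, image_univ]
    exact hd.isLUB_range

lemma le_iff_mem_of_isLUB (hd : IsPartitionOfUnity d) (ha : IsLUB (d '' S) a) {i : ι} :
    d i ≤ a ↔ i ∈ S := by
  refine ⟨fun hle ↦ ?_, fun hi ↦ ha.1 (mem_image_of_mem d hi)⟩
  by_contra hi
  have hdisj : Disjoint (d i) a := disjoint_right_of_isLUB ha <| by
    rintro _ ⟨j, hj, rfl⟩
    exact hd.pairwise_disjoint fun h ↦ hi (h ▸ hj)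
  exact hd.ne_bot i (hdisj.eq_bot_of_le hle)

lemma exists_boundedLatticeHom_isLUB (hd : IsPartitionOfUnity d)
    (hlub : ∀ S : Set ι, ∃ a, IsLUB (d '' S) a) :
    ∃ f : BoundedLatticeHom (Set ι) B, ∀ S, IsLUB (d '' S) (f S) := by
  choose f hf using hlub
  have map_compl (S : Set ι) : f Sᶜ = (f S)ᶜ :=
    (hd.isCompl_of_isLUB (hf S) (hf Sᶜ)).compl_eq.symm
  have map_sup (S T : Set ι) : f (S ∪ T) = f S ⊔ f T :=
    (hf (S ∪ T)).unique (image_union d S T ▸ (hf S).union (hf T))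
  have map_inf (S T : Set ι) : f (S ∩ T) = f S ⊓ f T := by
    rw [← compl_inj_iff, ← map_compl, compl_inter, map_sup, map_compl, map_compl, compl_inf]
  have map_bot : f ∅ = ⊥ := (hf ∅).unique (image_empty d ▸ isLUB_empty)
  have map_top : f univ = ⊤ := (hf univ).unique (image_univ ▸ hd.isLUB_range)
  exact ⟨⟨⟨⟨f, map_sup⟩, map_inf⟩, map_top, map_bot⟩, hf⟩

theorem exists_injective_boundedLatticeHom (hd : IsPartitionOfUnity d)
    (hlub : ∀ S : Set ι, ∃ a, IsLUB (d '' S) a) :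
    ∃ f : BoundedLatticeHom (Set ι) B, Injective f := by
  obtain ⟨f, hf⟩ := hd.exists_boundedLatticeHom_isLUB hlub
  refine ⟨f, fun S T hST ↦ Set.ext fun i ↦ ?_⟩
  rw [← hd.le_iff_mem_of_isLUB (hf S), ← hd.le_iff_mem_of_isLUB (hf T), hST]

end IsPartitionOfUnity

lemma isPartitionOfUnity_update_compl {ι B : Type*} [DecidableEq ι] [BooleanAlgebra B] {d : ι → B}
    (hne : ∀ i, d i ≠ ⊥) (hdisj : Pairwise (Disjoint on d)) (i : ι) {s : B}
    (hs : IsLUB (d '' {i}ᶜ) s) : IsPartitionOfUnity (update d i sᶜ) := by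
  have hle_s {j : ι} (hj : j ≠ i) : d j ≤ s := hs.1 (mem_image_of_mem d hj)
  have hd_le : d i ≤ sᶜ := le_compl_iff_disjoint_right.2 <| disjoint_right_of_isLUB hs <| by
    rintro _ ⟨j, hj, rfl⟩
    exact hdisj (Ne.symm hj)
  refine ⟨fun j ↦ ?_, fun j k hjk ↦ ?_, fun _ _ ↦ le_top, fun u hu ↦ ?_⟩
  · rcases eq_or_ne j i with rfl | hj
    · simpa using ne_bot_of_le_ne_bot (hne j) hd_le
    · simpa [hj] using hne j
  · rcases eq_or_ne j i with rfl | hj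
    · simpa [onFun, hjk.symm] using disjoint_compl_left.mono_right (hle_s hjk.symm)
    · rcases eq_or_ne k i with rfl | hk
      · simpa [onFun, hj] using disjoint_compl_right.mono_left (hle_s hj)
      · simpa [onFun, hj, hk] using hdisj hjk
  · have hcompl_le : sᶜ ≤ u := by simpa using hu (mem_range_self i)
    have hs_le : s ≤ u := hs.2 <| by
      rintro _ ⟨j, hj, rfl⟩
      simpa [show j ≠ i from hj] using hu (mem_range_self j)
    exact sup_compl_eq_top.ge.trans (sup_le hs_le hcompl_le)

section DisjointSequence

lemma infinite_Iic_or_infinite_Iic_sdiff {B : Type*} [GeneralizedBooleanAlgebra B] {a : B}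
    (ha : (Iic a).Infinite) (b : B) : (Iic b).Infinite ∨ (Iic (a \ b)).Infinite := by
  by_contra! h
  refine ha ((h.1.image2 (· ⊔ ·) h.2).subset fun x hx ↦ ?_)
  exact ⟨x ⊓ b, inf_le_right, x \ b, sdiff_le_sdiff_right hx, sup_inf_sdiff x b⟩

lemma exists_lt_infinite_Iic {B : Type*} [GeneralizedBooleanAlgebra B] {a : B}
    (ha : (Iic a).Infinite) : ∃ b < a, (Iic b).Infinite := by
  obtain ⟨b, hba, hb⟩ := ha.exists_notMem_finite (toFinite {⊥, a})
  obtain ⟨hb_bot, hb_ne⟩ : b ≠ ⊥ ∧ b ≠ a := by simpa using hb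
  rcases infinite_Iic_or_infinite_Iic_sdiff ha b with h | h
  · exact ⟨b, lt_of_le_of_ne hba hb_ne, h⟩
  · exact ⟨a \ b, sdiff_lt hba hb_bot, h⟩

lemma exists_strictAnti_of_infinite_Iic {B : Type*} [GeneralizedBooleanAlgebra B] {a : B}
    (ha : (Iic a).Infinite) : ∃ g : ℕ → B, StrictAnti g := by
  have : Nonempty {b : B // (Iic b).Infinite} := ⟨⟨a, ha⟩⟩
  have : NoMinOrder {b : B // (Iic b).Infinite} :=
    ⟨fun b ↦ let ⟨c, hcb, hc⟩ := exists_lt_infinite_Iic b.2; ⟨⟨c, hc⟩, hcb⟩⟩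
  obtain ⟨g, hg⟩ := Nat.exists_strictAnti {b : B // (Iic b).Infinite}
  exact ⟨fun n ↦ g n, hg⟩

lemma pairwise_disjoint_sdiff_succ {B : Type*} [GeneralizedBooleanAlgebra B] {g : ℕ → B}
    (hg : Antitone g) : Pairwise (Disjoint on fun n ↦ g n \ g (n + 1)) :=
  (pairwise_disjoint_on _).2 fun _ _ hmn ↦
    disjoint_sdiff_self_left.mono_right (sdiff_le.trans (hg hmn))

lemma exists_pairwise_disjoint_seq (B : Type*) [BooleanAlgebra B] [Infinite B] :
    ∃ d : ℕ → B, (∀ n, d n ≠ ⊥) ∧ Pairwise (Disjoint on d) := by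
  have htop : (Iic (⊤ : B)).Infinite := by simpa only [Iic_top] using infinite_univ
  obtain ⟨g, hg⟩ := exists_strictAnti_of_infinite_Iic htop
  exact ⟨fun n ↦ g n \ g (n + 1), fun n h ↦ (hg n.lt_succ_self).not_ge (sdiff_eq_bot_iff.1 h),
    pairwise_disjoint_sdiff_succ hg.antitone⟩

end DisjointSequence

theorem infinite_complete_not_hereditary_atomic_general {B : Type*} [BooleanAlgebra B]
    [Infinite B] (hB : ∀ s : Set B, s.Countable → ∃ a, IsLUB s a) :
    ∃ C : Set B, IsBoolSubalgebra C ∧ ¬ SubalgAtomic C := by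
  obtain ⟨d, hne, hdisj⟩ := exists_pairwise_disjoint_seq B
  have hlub (d : ℕ → B) (S : Set ℕ) : ∃ a, IsLUB (d '' S) a := hB _ (S.to_countable.image d)
  obtain ⟨s, hs⟩ := hlub d {0}ᶜ
  have hpart := isPartitionOfUnity_update_compl hne hdisj 0 hs
  obtain ⟨f, hf⟩ := hpart.exists_injective_boundedLatticeHom (hlub _)
  refine ⟨periodicSets.map f, isBoolSubalgebra_coe _, fun hatomic ↦ ?_⟩
  exact not_isAtomic_periodicSets ((isAtomic_map_iff hf _).1 hatomic.isAtomic)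

theorem infinite_complete_not_hereditary_atomic {B : Type*} [CompleteBooleanAlgebra B]
    [Infinite B] :
    ∃ C : Set B, IsBoolSubalgebra C ∧ ¬ SubalgAtomic C :=
  infinite_complete_not_hereditary_atomic_general fun s _ ↦ ⟨sSup s, isLUB_sSup s⟩
end
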